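/- There is no function U ∈ C²([0,1]) that solves (1−ρ²)U''(ρ) + (2/ρ − 4ρ)U'(ρ) − 2U(ρ) + U(ρ)³ = 0 for all ρ ∈ (0,1) and satisfies 0 < U(1) < √2. Equivalently, every solution regular at ρ = 1 with U(1) = b ∈ (0,√2) becomes singular at ρ = 0 (cannot be extended as a C² function to the closed interval [0,1]). -/

import Mathlib

/-!
Write `V = U'`, `A = U''` and `h = -V / U`. Multiplying the equation by `ρ` and passing to the limit
at the endpoints gives `V 0 = 0` and `V 1 = U 1 * (U 1 ^ 2 - 2) / 2 < 0`. Let `c < 1` be the largest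
point of `[0, 1]` with `0 ≤ V c`. On `(c, 1]` the function `U` decreases, so `U ≥ U 1 > 0` there.

* The function `v = ρ U` satisfies `((1 - ρ²) v')' = - v³ / ρ² = - ρ U³ < 0`. Since `(1 - ρ²) v'`
  vanishes at `1`, this gives `v' = U + ρ V > 0`, that is `ρ h < 1` (`profile_add_mul_deriv_pos`).
* The equation expresses `(1 - ρ²) h'` as an expression `G` in `ρ`, `U`, `V` alone, and `G`
  satisfies the linear equation
  `(ρ² (1 - ρ²) G)' = 2 h (1 - ρ²) ((1 - ρ h)² + ρ³ h (3 - ρ h))`,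
  whose right-hand side is positive when `0 < ρ h < 1`. As `ρ² (1 - ρ²) G` vanishes at `1`, `G < 0`
  on `(c, 1)`, so `h` is strictly decreasing on `[c, 1]` (`neg_logDeriv_strictAntiOn`).

Therefore `h c > h 1 > 0`, which contradicts `0 ≤ V c`.
-/

/-- The profile equation multiplied by `ρ`, for `V = U'` and `A = U''`; it makes sense at `ρ = 0`
and at `ρ = 1`. -/
def ProfileEq (U V A : ℝ → ℝ) (ρ : ℝ) : Prop :=
  ρ * (1 - ρ ^ 2) * A ρ + (2 - 4 * ρ ^ 2) * V ρ - 2 * ρ * U ρ + ρ * U ρ ^ 3 = 0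

/-- The function `(1 - ρ²) (ρ U)'` decreases to `0` at `ρ = 1`, so `ρ U` is increasing. -/
lemma profile_add_mul_deriv_pos {U V A : ℝ → ℝ} {c : ℝ} (hc : 0 ≤ c)
    (hU : ContinuousOn U (Set.Icc c 1)) (hV : ContinuousOn V (Set.Icc c 1))
    (dU : ∀ ρ ∈ Set.Ioo c 1, HasDerivAt U (V ρ) ρ)
    (dV : ∀ ρ ∈ Set.Ioo c 1, HasDerivAt V (A ρ) ρ)
    (ode : ∀ ρ ∈ Set.Ioo c 1, ProfileEq U V A ρ)
    (Upos : ∀ ρ ∈ Set.Icc c 1, 0 < U ρ) :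
    ∀ ρ ∈ Set.Ioo c 1, 0 < U ρ + ρ * V ρ := by
  have hanti : StrictAntiOn (fun ρ => (1 - ρ ^ 2) * (U ρ + ρ * V ρ)) (Set.Icc c 1) := by
    refine strictAntiOn_of_deriv_neg (convex_Icc c 1) (by fun_prop) fun ρ hρ => ?_
    rw [interior_Icc] at hρ
    have h0 : 0 < ρ := hc.trans_lt hρ.1
    have d1 : HasDerivAt (fun ρ : ℝ => 1 - ρ ^ 2) (-(2 * ρ)) ρ := by
      simpa using ((hasDerivAt_id ρ).pow 2).const_sub 1
    have d := d1.mul ((dU ρ hρ).add ((hasDerivAt_id ρ).mul (dV ρ hρ)))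
    have e : deriv (fun ρ => (1 - ρ ^ 2) * (U ρ + ρ * V ρ)) ρ = -(ρ * U ρ ^ 3) := by
      refine d.deriv.trans ?_
      have := ode ρ hρ
      unfold ProfileEq at this
      simp only [id, Pi.add_apply, Pi.mul_apply]
      linear_combination this
    rw [e]
    have := Upos ρ ⟨hρ.1.le, hρ.2.le⟩
    have : 0 < ρ * U ρ ^ 3 := by positivity
    linarith
  intro ρ hρ
  have h := hanti ⟨hρ.1.le, hρ.2.le⟩ ⟨(hρ.1.trans hρ.2).le, le_rfl⟩ hρ.2
  have h1 : 0 < 1 - ρ ^ 2 := by nlinarith [hρ.1, hρ.2]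
  norm_num at h
  exact (pos_iff_pos_of_mul_pos h).1 h1

/-- As long as `U > 0` and `U' < 0`, the function `h = -U' / U` is strictly decreasing. -/
lemma neg_logDeriv_strictAntiOn {U V A : ℝ → ℝ} {c : ℝ} (hc : 0 ≤ c)
    (hU : ContinuousOn U (Set.Icc c 1)) (hV : ContinuousOn V (Set.Icc c 1))
    (dU : ∀ ρ ∈ Set.Ioo c 1, HasDerivAt U (V ρ) ρ)
    (dV : ∀ ρ ∈ Set.Ioo c 1, HasDerivAt V (A ρ) ρ)
    (ode : ∀ ρ ∈ Set.Ioo c 1, ProfileEq U V A ρ)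
    (Upos : ∀ ρ ∈ Set.Icc c 1, 0 < U ρ) (Vneg : ∀ ρ ∈ Set.Ioo c 1, V ρ < 0) :
    StrictAntiOn (fun ρ => -V ρ / U ρ) (Set.Icc c 1) := by
  have Une : ∀ ρ ∈ Set.Icc c 1, U ρ ≠ 0 := fun ρ hρ => (Upos ρ hρ).ne'
  have U2ne : ∀ ρ ∈ Set.Icc c 1, U ρ ^ 2 ≠ 0 := fun ρ hρ => pow_ne_zero 2 (Une ρ hρ)
  -- `R = ρ U² G`, hence `K = ρ² (1 - ρ²) G`.
  let R : ℝ → ℝ := fun ρ =>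
    ρ * (1 - ρ ^ 2) * V ρ ^ 2 + (2 - 4 * ρ ^ 2) * (V ρ * U ρ) - 2 * ρ * U ρ ^ 2 + ρ * U ρ ^ 4
  let K : ℝ → ℝ := fun ρ => ρ * (1 - ρ ^ 2) * R ρ / U ρ ^ 2
  have hR : ContinuousOn R (Set.Icc c 1) := by fun_prop
  have hK : ContinuousOn K (Set.Icc c 1) :=
    ContinuousOn.div (by fun_prop) (by fun_prop) U2ne
  have hmono : StrictMonoOn K (Set.Icc c 1) := by
    refine strictMonoOn_of_deriv_pos (convex_Icc c 1) hK fun ρ hρ => ?_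
    rw [interior_Icc] at hρ
    have hρ' : ρ ∈ Set.Icc c 1 := ⟨hρ.1.le, hρ.2.le⟩
    have h0 : 0 < ρ := hc.trans_lt hρ.1
    have h1 : 0 < 1 - ρ ^ 2 := by nlinarith [hρ.1, hρ.2]
    have hUp := Upos ρ hρ'
    have hVn := Vneg ρ hρ
    have hs := profile_add_mul_deriv_pos hc hU hV dU dV ode Upos ρ hρ
    have d1 : HasDerivAt (fun ρ : ℝ => 1 - ρ ^ 2) (-(2 * ρ)) ρ := by
      simpa using ((hasDerivAt_id ρ).pow 2).const_sub 1
    have d2 : HasDerivAt (fun ρ : ℝ => 2 - 4 * ρ ^ 2) (-(8 * ρ)) ρ := by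
      refine (((((hasDerivAt_id ρ).pow 2).const_mul 4)).const_sub 2).congr_deriv ?_
      simp only [id]; norm_num; ring
    have d3 : HasDerivAt (fun ρ : ℝ => ρ * (1 - ρ ^ 2)) (1 - 3 * ρ ^ 2) ρ := by
      refine ((hasDerivAt_id ρ).mul d1).congr_deriv ?_
      simp only [id]; ring
    have d4 : HasDerivAt (fun ρ : ℝ => 2 * ρ) 2 ρ := by
      simpa using (hasDerivAt_id ρ).const_mul (2 : ℝ)
    have dR := (((d3.mul ((dV ρ hρ).pow 2)).add (d2.mul ((dV ρ hρ).mul (dU ρ hρ)))).sub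
      (d4.mul ((dU ρ hρ).pow 2))).add ((hasDerivAt_id ρ).mul ((dU ρ hρ).pow 4))
    have dK := (d3.mul dR).div ((dU ρ hρ).pow 2) (U2ne ρ hρ')
    have e : deriv K ρ = 2 * (-V ρ) * (1 - ρ ^ 2) *
        ((U ρ + ρ * V ρ) ^ 2 + ρ ^ 3 * (-V ρ) * (3 * U ρ + ρ * V ρ)) / U ρ ^ 3 := by
      refine dK.deriv.trans ?_
      have ho := ode ρ hρ
      unfold ProfileEq at ho
      have hA : A ρ = -((2 - 4 * ρ ^ 2) * V ρ - 2 * ρ * U ρ + ρ * U ρ ^ 3)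
          / (ρ * (1 - ρ ^ 2)) := by
        rw [eq_div_iff (by positivity)]
        linear_combination ho
      simp only [id, Pi.add_apply, Pi.mul_apply, Pi.pow_apply, Pi.sub_apply, hA]
      have := hUp.ne'
      have := h0.ne'
      have := h1.ne'
      field_simp
      push_cast
      ring
    rw [e]
    have hn : 0 < -V ρ := by linarith
    have h3 : 0 < 3 * U ρ + ρ * V ρ := by linarith
    positivity
  have K1 : K 1 = 0 := by simp [K]
  refine strictAntiOn_of_deriv_neg (convex_Icc c 1) (hV.neg.div hU Une) fun ρ hρ => ?_
  rw [interior_Icc] at hρ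
  have hρ' : ρ ∈ Set.Icc c 1 := ⟨hρ.1.le, hρ.2.le⟩
  have h0 : 0 < ρ := hc.trans_lt hρ.1
  have h1 : 0 < 1 - ρ ^ 2 := by nlinarith [hρ.1, hρ.2]
  have hUp := Upos ρ hρ'
  have hKneg : K ρ < 0 := K1 ▸ hmono hρ' ⟨(hρ.1.trans hρ.2).le, le_rfl⟩ hρ.2
  have e : deriv (fun ρ => -V ρ / U ρ) ρ = K ρ / (ρ ^ 2 * (1 - ρ ^ 2) ^ 2) := by
    refine ((dV ρ hρ).neg.div (dU ρ hρ) (Une ρ hρ')).deriv.trans ?_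
    have ho := ode ρ hρ
    unfold ProfileEq at ho
    have hA : A ρ = -((2 - 4 * ρ ^ 2) * V ρ - 2 * ρ * U ρ + ρ * U ρ ^ 3)
        / (ρ * (1 - ρ ^ 2)) := by
      rw [eq_div_iff (by positivity)]
      linear_combination ho
    simp only [K, R, hA, Pi.neg_apply]
    have := hUp.ne'
    have := h0.ne'
    have := h1.ne'
    field_simp
    ring
  rw [e]
  exact div_neg_of_neg_of_pos hKneg (by positivity)

/-- No-solution statement in first-order form, with the equation holding up to the endpoints. -/
lemma no_small_profile {U V A : ℝ → ℝ}
    (hU : ContinuousOn U (Set.Icc 0 1)) (hV : ContinuousOn V (Set.Icc 0 1))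
    (dU : ∀ ρ ∈ Set.Ioo (0 : ℝ) 1, HasDerivAt U (V ρ) ρ)
    (dV : ∀ ρ ∈ Set.Ioo (0 : ℝ) 1, HasDerivAt V (A ρ) ρ)
    (ode : ∀ ρ ∈ Set.Icc (0 : ℝ) 1, ProfileEq U V A ρ)
    (hb : 0 < U 1) (hb2 : U 1 ^ 2 < 2) : False := by
  have V0 : V 0 = 0 := by
    have := ode 0 (by simp)
    unfold ProfileEq at this
    linarith
  have V1 : V 1 < 0 := by
    have := ode 1 (by simp)
    unfold ProfileEq at this
    nlinarith [mul_pos hb (sub_pos.2 hb2)]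
  obtain ⟨c, ⟨hcI, hcV⟩, hmax⟩ : ∃ c, IsGreatest (Set.Icc (0 : ℝ) 1 ∩ V ⁻¹' Set.Ici 0) c :=
    (isCompact_Icc.of_isClosed_subset (hV.preimage_isClosed_of_isClosed isClosed_Icc isClosed_Ici)
      Set.inter_subset_left).exists_isGreatest ⟨0, by simp, by simp [V0]⟩
  have hsub : Set.Icc c 1 ⊆ Set.Icc 0 1 := Set.Icc_subset_Icc_left hcI.1
  have hsub' : Set.Ioo c 1 ⊆ Set.Ioo 0 1 := Set.Ioo_subset_Ioo_left hcI.1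
  have Vneg : ∀ ρ ∈ Set.Ioo c 1, V ρ < 0 := fun ρ hρ => by
    by_contra! h
    exact absurd (hmax ⟨hsub ⟨hρ.1.le, hρ.2.le⟩, h⟩) (not_le.2 hρ.1)
  have hc1 : c < 1 := lt_of_le_of_ne hcI.2 fun h => by
    subst h
    exact absurd hcV (not_le.2 V1)
  have hanti : StrictAntiOn U (Set.Icc c 1) :=
    strictAntiOn_of_deriv_neg (convex_Icc c 1) (hU.mono hsub) fun ρ hρ => by
      rw [interior_Icc] at hρ
      rw [(dU ρ (hsub' hρ)).deriv]
      exact Vneg ρ hρ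
  have Upos : ∀ ρ ∈ Set.Icc c 1, 0 < U ρ := fun ρ hρ =>
    hb.trans_le (hanti.antitoneOn hρ ⟨hc1.le, le_rfl⟩ hρ.2)
  have h := neg_logDeriv_strictAntiOn hcI.1 (hU.mono hsub) (hV.mono hsub)
    (fun ρ hρ => dU ρ (hsub' hρ)) (fun ρ hρ => dV ρ (hsub' hρ))
    (fun ρ hρ => ode ρ (hsub ⟨hρ.1.le, hρ.2.le⟩)) Upos Vneg
    ⟨le_rfl, hc1.le⟩ ⟨hc1.le, le_rfl⟩ hc1
  have hpos : 0 < -V 1 / U 1 := div_pos (by linarith) hb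
  have hcV' : 0 ≤ V c := hcV
  have hnonpos : -V c / U c ≤ 0 :=
    div_nonpos_of_nonpos_of_nonneg (by linarith) (Upos c ⟨le_rfl, hc1.le⟩).le
  exact absurd (hpos.trans h) (not_lt.2 hnonpos)

/-- No `C²` solution of the profile equation on the closed interval `[0,1]` can have
`0 < U(1) < √2`: `b`-orbits with `0 < b < √2` are singular at `ρ = 0`. -/
theorem cubic_wave_no_small_b_orbit :
    ¬ ∃ U : ℝ → ℝ,
      ContDiffOn ℝ 2 U (Set.Icc 0 1) ∧
      (∀ ρ ∈ Set.Ioo (0 : ℝ) 1,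
        (1 - ρ ^ 2) * deriv (deriv U) ρ + (2 / ρ - 4 * ρ) * deriv U ρ
          - 2 * U ρ + (U ρ) ^ 3 = 0) ∧
      0 < U 1 ∧ U 1 < Real.sqrt 2 := by
  rintro ⟨U, hC, hode, hb, hb2⟩
  have huniq : UniqueDiffOn ℝ (Set.Icc (0 : ℝ) 1) := uniqueDiffOn_Icc one_pos
  -- One-sided derivatives, continuous up to the endpoints and equal to `deriv` inside.
  set V := derivWithin U (Set.Icc 0 1) with hVdef
  set A := derivWithin V (Set.Icc 0 1) with hAdef
  have hCV : ContDiffOn ℝ 1 V (Set.Icc 0 1) := hC.derivWithin huniq (by norm_num)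
  have hU := hC.continuousOn
  have hV := hCV.continuousOn
  have hA : ContinuousOn A (Set.Icc 0 1) := hCV.continuousOn_derivWithin huniq le_rfl
  have nhds : ∀ ρ ∈ Set.Ioo (0 : ℝ) 1, Set.Icc (0 : ℝ) 1 ∈ nhds ρ :=
    fun ρ hρ => Icc_mem_nhds hρ.1 hρ.2
  have dU : ∀ ρ ∈ Set.Ioo (0 : ℝ) 1, HasDerivAt U (V ρ) ρ := fun ρ hρ =>
    ((hC.differentiableOn (by norm_num)) ρ ⟨hρ.1.le, hρ.2.le⟩).hasDerivWithinAt.hasDerivAt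
      (nhds ρ hρ)
  have dV : ∀ ρ ∈ Set.Ioo (0 : ℝ) 1, HasDerivAt V (A ρ) ρ := fun ρ hρ =>
    ((hCV.differentiableOn (by norm_num)) ρ ⟨hρ.1.le, hρ.2.le⟩).hasDerivWithinAt.hasDerivAt
      (nhds ρ hρ)
  have ode : ∀ ρ ∈ Set.Ioo (0 : ℝ) 1, ProfileEq U V A ρ := fun ρ hρ => by
    have e1 : deriv (deriv U) ρ = A ρ := by
      rw [← (dV ρ hρ).deriv]
      refine Filter.EventuallyEq.deriv_eq ?_
      filter_upwards [isOpen_Ioo.mem_nhds hρ] with x hx using (dU x hx).deriv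
    have h := hode ρ hρ
    rw [e1, (dU ρ hρ).deriv] at h
    have h0 := hρ.1.ne'
    unfold ProfileEq
    field_simp at h
    linear_combination h
  have ode' : ∀ ρ ∈ Set.Icc (0 : ℝ) 1, ProfileEq U V A ρ := by
    have hcont : ContinuousOn (fun ρ => ρ * (1 - ρ ^ 2) * A ρ + (2 - 4 * ρ ^ 2) * V ρ
        - 2 * ρ * U ρ + ρ * U ρ ^ 3) (Set.Icc 0 1) := by fun_prop
    have hEq : Set.EqOn (fun ρ => ρ * (1 - ρ ^ 2) * A ρ + (2 - 4 * ρ ^ 2) * V ρ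
        - 2 * ρ * U ρ + ρ * U ρ ^ 3) (fun _ => 0) (Set.Ioo 0 1) := ode
    exact hEq.of_subset_closure hcont continuousOn_const Set.Ioo_subset_Icc_self
      (closure_Ioo zero_ne_one).ge
  exact no_small_profile hU hV dU dV ode' hb ((Real.lt_sqrt hb.le).1 hb2)
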